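/- arXiv:2308.06130 — 5 statements merged into one kernel-verified Lean document; each statement's English description precedes it below -/
import Mathlib

section
/- Let D be an integer with D ≡ 0 or 1 (mod 4) and let r be a positive integer. For every primitive binary quadratic form f of discriminant D·r² there exist a binary quadratic form g of discriminant D and a 2×2 integer matrix A with det(A) = r such that f is derived from g via A. -/
/-- A binary quadratic form `(a, b, c)` evaluated at `(x, y)`. -/
def qfEval (f : ℤ × ℤ × ℤ) (x y : ℤ) : ℤ :=
  f.1 * x ^ 2 + f.2.1 * x * y + f.2.2 * y ^ 2

/-- The discriminant `b² - 4ac` of the form `(a, b, c)`. -/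
def qfDisc (f : ℤ × ℤ × ℤ) : ℤ := f.2.1 ^ 2 - 4 * f.1 * f.2.2

/-- The form `(a, b, c)` is primitive if `gcd(a, b, c) = 1`. -/
def IsPrimitiveQF (f : ℤ × ℤ × ℤ) : Prop :=
  Int.gcd (Int.gcd f.1 f.2.1) f.2.2 = 1

/-- `f` is derived from `g` via the matrix `A`, i.e. `f(x,y) = g(A·(x,y)ᵀ)`. -/
def DerivedVia (f g : ℤ × ℤ × ℤ) (A : Matrix (Fin 2) (Fin 2) ℤ) : Prop :=
  ∀ x y : ℤ, qfEval f x y = qfEval g (A 0 0 * x + A 0 1 * y) (A 1 0 * x + A 1 1 * y)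

/-- Two forms are equivalent if one is derived from the other via a determinant-1
integer matrix. -/
def QFEquiv (f g : ℤ × ℤ × ℤ) : Prop :=
  ∃ A : Matrix (Fin 2) (Fin 2) ℤ, A.det = 1 ∧ DerivedVia f g A

/-! A form whose content is coprime to `r` properly represents an integer `a` coprime to `r`, so it
is equivalent to some `(a, b, c)`. A translation `x ↦ x + k y` with `b + 2 a k = r B` then makes the
middle coefficient divisible by `r`; if moreover `B ≡ D (mod 2)`, completing the square shows that
`r²` divides the last coefficient. The translated form is therefore `(a, r B, r² C)`, which is
derived from `(a, B, C)` via `diag(1, r)`. -/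

/-- The form `g(αx + βy, γx + δy)` obtained from `g` by the substitution with matrix
`A = [[α, β], [γ, δ]]`; it is the unique form derived from `g` via `A`. -/
def qfSubst (g : ℤ × ℤ × ℤ) (A : Matrix (Fin 2) (Fin 2) ℤ) : ℤ × ℤ × ℤ :=
  (qfEval g (A 0 0) (A 1 0),
    2 * g.1 * A 0 0 * A 0 1 + g.2.1 * (A 0 0 * A 1 1 + A 0 1 * A 1 0) + 2 * g.2.2 * A 1 0 * A 1 1,
    qfEval g (A 0 1) (A 1 1))

/-- The content `gcd(a, b, c)` of the form `(a, b, c)`; primitive forms are those of content `1`. -/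
def qfContent (f : ℤ × ℤ × ℤ) : ℕ :=
  Int.gcd (Int.gcd f.1 f.2.1) f.2.2

section Substitution

variable {f g h : ℤ × ℤ × ℤ} {A B : Matrix (Fin 2) (Fin 2) ℤ}

theorem qfEval_qfSubst (g : ℤ × ℤ × ℤ) (A : Matrix (Fin 2) (Fin 2) ℤ) (x y : ℤ) :
    qfEval (qfSubst g A) x y = qfEval g (A 0 0 * x + A 0 1 * y) (A 1 0 * x + A 1 1 * y) := by
  simp only [qfSubst, qfEval]
  ring

theorem qfEval_injective : Function.Injective qfEval := by
  intro f g hfg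
  have heval (x y : ℤ) : qfEval f x y = qfEval g x y := congrFun₂ hfg x y
  have h₁₀ : f.1 = g.1 := by simpa [qfEval] using heval 1 0
  have h₀₁ : f.2.2 = g.2.2 := by simpa [qfEval] using heval 0 1
  have h₁₁ : f.2.1 = g.2.1 := by simpa [qfEval, h₁₀, h₀₁] using heval 1 1
  exact Prod.ext h₁₀ (Prod.ext h₁₁ h₀₁)

theorem derivedVia_qfSubst (g : ℤ × ℤ × ℤ) (A : Matrix (Fin 2) (Fin 2) ℤ) :
    DerivedVia (qfSubst g A) g A :=
  qfEval_qfSubst g A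

theorem DerivedVia.eq_qfSubst (hfg : DerivedVia f g A) : f = qfSubst g A :=
  qfEval_injective <| funext₂ fun x y => (hfg x y).trans (qfEval_qfSubst g A x y).symm

theorem qfDisc_qfSubst (g : ℤ × ℤ × ℤ) (A : Matrix (Fin 2) (Fin 2) ℤ) :
    qfDisc (qfSubst g A) = A.det ^ 2 * qfDisc g := by
  simp only [qfSubst, qfDisc, qfEval, Matrix.det_fin_two]
  ring

theorem DerivedVia.qfDisc_eq (hfg : DerivedVia f g A) : qfDisc f = A.det ^ 2 * qfDisc g := by
  rw [hfg.eq_qfSubst, qfDisc_qfSubst]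

theorem DerivedVia.trans (hfg : DerivedVia f g A) (hgh : DerivedVia g h B) :
    DerivedVia f h (B * A) := by
  intro x y
  rw [hfg, hgh]
  simp only [Matrix.mul_apply, Fin.sum_univ_two]
  congr 1 <;> ring

theorem DerivedVia.adjugate (hfg : DerivedVia f g A) (hA : A.det = 1) :
    DerivedVia g f A.adjugate := by
  intro x y
  rw [Matrix.det_fin_two] at hA
  rw [hfg, Matrix.adjugate_fin_two]
  simp only [Matrix.of_apply, Matrix.cons_val', Matrix.cons_val_zero, Matrix.cons_val_one,
    Matrix.cons_val_fin_one]
  congr 1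
  · linear_combination (-x) * hA
  · linear_combination (-y) * hA

theorem QFEquiv.symm (hfg : QFEquiv f g) : QFEquiv g f := by
  obtain ⟨A, hA, hfg⟩ := hfg
  exact ⟨A.adjugate, by simp [Matrix.det_adjugate, hA], hfg.adjugate hA⟩

theorem QFEquiv.qfDisc_eq (hfg : QFEquiv f g) : qfDisc f = qfDisc g := by
  obtain ⟨A, hA, hfg⟩ := hfg
  rw [hfg.qfDisc_eq, hA, one_pow, one_mul]

theorem exists_qfEquiv_fst_eq_qfEval (f : ℤ × ℤ × ℤ) {x y : ℤ} (hxy : IsCoprime x y) :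
    ∃ f', QFEquiv f f' ∧ f'.1 = qfEval f x y := by
  obtain ⟨u, v, huv⟩ := hxy
  let M : Matrix (Fin 2) (Fin 2) ℤ := !![x, -v; y, u]
  have hM : M.det = 1 := by
    rw [Matrix.det_fin_two_of]
    linear_combination huv
  exact ⟨qfSubst f M, QFEquiv.symm ⟨M, hM, derivedVia_qfSubst f M⟩, rfl⟩

end Substitution

section Representation

variable {f : ℤ × ℤ × ℤ}

theorem isCoprime_of_forall_prime_not_dvd {m n : ℤ}
    (hmn : ∀ p : ℕ, p.Prime → (p : ℤ) ∣ m → ¬(p : ℤ) ∣ n) : IsCoprime m n :=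
  Int.isCoprime_iff_nat_coprime.2 <| Nat.coprime_of_dvd fun p hp hm hn =>
    hmn p hp (Int.natCast_dvd.2 hm) (Int.natCast_dvd.2 hn)

theorem exists_forall_prime_dvd_iff {n : ℕ} (hn : n ≠ 0) (P : ℕ → Prop) :
    ∃ m : ℕ, ∀ p : ℕ, p.Prime → (p ∣ m ↔ p ∣ n ∧ P p) := by
  classical
  let S := n.primeFactors.filter P
  have hS : ∀ p ∈ S, p.Prime := fun p hp => Nat.prime_of_mem_primeFactors (Finset.mem_filter.1 hp).1
  have hprod : ∏ p ∈ S, p ≠ 0 := Finset.prod_ne_zero_iff.2 fun p hp => (hS p hp).ne_zero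
  refine ⟨∏ p ∈ S, p, fun p hp => ?_⟩
  calc p ∣ ∏ q ∈ S, q
    _ ↔ p ∈ (∏ q ∈ S, q).primeFactors := by rw [Nat.mem_primeFactors_of_ne_zero hprod,
          and_iff_right hp]
    _ ↔ p ∈ S := by rw [Nat.primeFactors_prod hS]
    _ ↔ p ∣ n ∧ P p := by simp [S, hp, hn]

theorem dvd_qfContent_iff {d : ℤ} : d ∣ qfContent f ↔ d ∣ f.1 ∧ d ∣ f.2.1 ∧ d ∣ f.2.2 := by
  rw [qfContent, Int.dvd_coe_gcd_iff, Int.dvd_coe_gcd_iff, and_assoc]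

theorem not_dvd_qfEval {p x y : ℤ} (hp : Prime p) (hf : ¬p ∣ qfContent f)
    (hx : p ∣ x ↔ p ∣ f.1 ∧ ¬p ∣ f.2.2) (hy : p ∣ y ↔ ¬p ∣ f.1) : ¬p ∣ qfEval f x y := by
  -- Modulo `p` exactly one of the three monomials survives, and its coefficient is not `0`.
  intro hdvd
  by_cases ha : p ∣ f.1
  · by_cases hc : p ∣ f.2.2
    · have hb : ¬p ∣ f.2.1 := fun hb => hf (dvd_qfContent_iff.2 ⟨ha, hb, hc⟩)
      have hbxy : p ∣ f.2.1 * x * y := by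
        rwa [qfEval, dvd_add_left (hc.mul_right _), dvd_add_right (ha.mul_right _)] at hdvd
      have hpx : ¬p ∣ x := fun h => (hx.1 h).2 hc
      have hpy : ¬p ∣ y := fun h => hy.1 h ha
      exact hp.not_dvd_mul (hp.not_dvd_mul hb hpx) hpy hbxy
    · have hpx : p ∣ x := hx.2 ⟨ha, hc⟩
      have hcy : p ∣ f.2.2 * y ^ 2 := by
        rwa [qfEval, dvd_add_right] at hdvd
        exact dvd_add (ha.mul_right _) ((hpx.mul_left _).mul_right _)
      exact hp.not_dvd_mul hc (fun h => hy.1 (hp.dvd_of_dvd_pow h) ha) hcy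
  · have hpy : p ∣ y := hy.2 ha
    have hax : p ∣ f.1 * x ^ 2 := by
      rwa [qfEval, dvd_add_left ((hpy.pow two_ne_zero).mul_left _),
        dvd_add_left (hpy.mul_left _)] at hdvd
    exact hp.not_dvd_mul ha (fun h => ha (hx.1 (hp.dvd_of_dvd_pow h)).1) hax

theorem exists_isCoprime_qfEval {n : ℤ} (hn : n ≠ 0) (hf : IsCoprime (qfContent f : ℤ) n) :
    ∃ x y : ℤ, IsCoprime x y ∧ IsCoprime (qfEval f x y) n := by
  have hn' : n.natAbs ≠ 0 := Int.natAbs_ne_zero.2 hn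
  obtain ⟨x, hx⟩ := exists_forall_prime_dvd_iff hn' fun p => (p : ℤ) ∣ f.1 ∧ ¬(p : ℤ) ∣ f.2.2
  obtain ⟨y, hy⟩ := exists_forall_prime_dvd_iff hn' fun p => ¬(p : ℤ) ∣ f.1
  refine ⟨x, y, ?_, (isCoprime_of_forall_prime_not_dvd fun p hp hpn => ?_).symm⟩
  · refine Nat.isCoprime_iff_coprime.2 (Nat.coprime_of_dvd fun p hp hpx hpy => ?_)
    exact ((hy p hp).1 hpy).2 ((hx p hp).1 hpx).2.1
  · have hp' : Prime (p : ℤ) := Nat.prime_iff_prime_int.1 hp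
    have hpn' : p ∣ n.natAbs := Int.natCast_dvd.1 hpn
    refine not_dvd_qfEval hp' (fun hpf => hp'.not_isUnit (hf.isUnit_of_dvd' hpf hpn)) ?_ ?_
    · rw [Int.natCast_dvd_natCast, hx p hp, and_iff_right hpn']
    · rw [Int.natCast_dvd_natCast, hy p hp, and_iff_right hpn']

theorem exists_qfEquiv_isCoprime_fst {n : ℤ} (hn : n ≠ 0) (hf : IsCoprime (qfContent f : ℤ) n) :
    ∃ f', QFEquiv f f' ∧ IsCoprime f'.1 n := by
  obtain ⟨x, y, hxy, hcop⟩ := exists_isCoprime_qfEval hn hf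
  obtain ⟨f', hff', hfst⟩ := exists_qfEquiv_fst_eq_qfEval f hxy
  exact ⟨f', hff', hfst ▸ hcop⟩

end Representation

section Descent

variable {f : ℤ × ℤ × ℤ} {D r : ℤ}

theorem four_mul_fst_mul_qfEval (f : ℤ × ℤ × ℤ) (x y : ℤ) :
    4 * (f.1 * qfEval f x y) = (2 * f.1 * x + f.2.1 * y) ^ 2 - qfDisc f * y ^ 2 := by
  simp only [qfEval, qfDisc]
  ring

theorem four_dvd_sq_sub (hD : D % 4 = 0 ∨ D % 4 = 1) {B : ℤ} (hB : 2 ∣ B - D) :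
    4 ∣ B ^ 2 - D := by
  obtain ⟨t, ht⟩ := hB
  have hDD : 4 ∣ D * (D - 1) := by
    rcases hD with hD | hD
    · exact (Int.dvd_of_emod_eq_zero hD).mul_right _
    · exact (Int.dvd_self_sub_of_emod_eq hD).mul_left _
  have hB : B ^ 2 - D = D * (D - 1) + 4 * (t * D + t ^ 2) := by
    linear_combination (B + D + 2 * t) * ht
  exact hB ▸ dvd_add hDD (dvd_mul_right 4 _)

theorem two_dvd_middle_sub (hdisc : qfDisc f = D * r ^ 2) : 2 ∣ f.2.1 - r * D := by
  have hsq : Even (f.2.1 ^ 2 - D * r ^ 2) :=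
    ⟨2 * f.1 * f.2.2, by rw [← hdisc, qfDisc]; ring⟩
  rw [← even_iff_two_dvd]
  simp only [Int.even_sub, Int.even_mul, Int.even_pow] at hsq ⊢
  tauto

theorem exists_add_two_mul_eq_mul {a b : ℤ} (ha : IsCoprime a r) (hb : 2 ∣ b - r * D) :
    ∃ k B : ℤ, b + 2 * a * k = r * B ∧ 2 ∣ B - D := by
  obtain ⟨s, hs⟩ := hb
  obtain ⟨u, v, huv⟩ := ha
  refine ⟨-(s * u), D + 2 * (s * v), ?_, s * v, by ring⟩
  linear_combination hs - 2 * s * huv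

theorem sq_dvd_qfEval_of_isCoprime_fst (hD : D % 4 = 0 ∨ D % 4 = 1) (hf : IsCoprime f.1 r)
    (hdisc : qfDisc f = D * r ^ 2) {k B : ℤ} (hk : f.2.1 + 2 * f.1 * k = r * B) (hB : 2 ∣ B - D) :
    r ^ 2 ∣ qfEval f k 1 := by
  obtain ⟨m, hm⟩ := four_dvd_sq_sub hD hB
  have hmul : f.1 * qfEval f k 1 = r ^ 2 * m := by
    refine mul_left_cancel₀ (four_ne_zero (α := ℤ)) ?_
    rw [four_mul_fst_mul_qfEval, hdisc]
    linear_combination (f.2.1 + 2 * f.1 * k + r * B) * hk + r ^ 2 * hm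
  exact hf.symm.pow_left.dvd_of_dvd_mul_left ⟨m, hmul⟩

theorem exists_derivedVia_of_isCoprime_fst (hD : D % 4 = 0 ∨ D % 4 = 1) (hr : r ≠ 0)
    (hf : IsCoprime f.1 r) (hdisc : qfDisc f = D * r ^ 2) :
    ∃ (g : ℤ × ℤ × ℤ) (A : Matrix (Fin 2) (Fin 2) ℤ),
      qfDisc g = D ∧ A.det = r ∧ DerivedVia f g A := by
  obtain ⟨k, B, hk, hB⟩ := exists_add_two_mul_eq_mul hf (two_dvd_middle_sub hdisc)
  obtain ⟨C, hC⟩ := sq_dvd_qfEval_of_isCoprime_fst hD hf hdisc hk hB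
  let A : Matrix (Fin 2) (Fin 2) ℤ := !![1, -k; 0, r]
  have hA : A.det = r := by simp [A]
  have hfg : DerivedVia f (f.1, B, C) A := by
    intro x y
    simp only [qfEval] at hC
    simp only [qfEval, A, Matrix.of_apply, Matrix.cons_val', Matrix.cons_val_zero,
      Matrix.cons_val_one, Matrix.cons_val_fin_one]
    linear_combination y ^ 2 * hC + (x * y - k * y ^ 2) * hk
  refine ⟨(f.1, B, C), A, mul_left_cancel₀ (pow_ne_zero 2 hr) ?_, hA, hfg⟩
  rw [← hA, ← hfg.qfDisc_eq, hdisc, hA, mul_comm]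

end Descent

theorem stmt0_general (D : ℤ) (hD : D % 4 = 0 ∨ D % 4 = 1) (r : ℤ) (hr : r ≠ 0)
    (f : ℤ × ℤ × ℤ) (hf : IsCoprime (qfContent f : ℤ) r) (hdisc : qfDisc f = D * r ^ 2) :
    ∃ (g : ℤ × ℤ × ℤ) (A : Matrix (Fin 2) (Fin 2) ℤ),
      qfDisc g = D ∧ A.det = r ∧ DerivedVia f g A := by
  obtain ⟨f', hff', hfst⟩ := exists_qfEquiv_isCoprime_fst hr hf
  obtain ⟨g, A, hg, hA, hf'g⟩ :=
    exists_derivedVia_of_isCoprime_fst hD hr hfst (hff'.qfDisc_eq ▸ hdisc)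
  obtain ⟨U, hU, hff'⟩ := hff'
  exact ⟨g, A * U, hg, by rw [Matrix.det_mul, hA, hU, mul_one], hff'.trans hf'g⟩

theorem stmt0 (D : ℤ) (hD : D % 4 = 0 ∨ D % 4 = 1) (r : ℕ) (hr : 0 < r)
    (f : ℤ × ℤ × ℤ) (hf : IsPrimitiveQF f) (hdisc : qfDisc f = D * (r : ℤ) ^ 2) :
    ∃ (g : ℤ × ℤ × ℤ) (A : Matrix (Fin 2) (Fin 2) ℤ),
      qfDisc g = D ∧ A.det = (r : ℤ) ∧ DerivedVia f g A := by
  have hcontent : qfContent f = 1 := hf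
  exact stmt0_general D hD r (mod_cast hr.ne') f (by simp [hcontent, isCoprime_one_left]) hdisc
end

section
/- Let g = (a,b,c) be a primitive binary quadratic form of discriminant D with D ≡ 0 or 1 (mod 4), and let p be a prime with gcd(a,p) = 1. Then every binary quadratic form of discriminant D·p² that is derived from g via some 2×2 integer matrix of determinant p is equivalent to one of the p+1 forms (a·p², p·(b+2ah), a·h²+b·h+c) for some 0 ≤ h ≤ p−1, or (a, b·p, c·p²). -/
/-- The `p + 1` forms of discriminant `D·p²` obtained from `(a, b, c)` by the
representative transformations: `(a·p², p·(b + 2ah), a·h² + b·h + c)` for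
`0 ≤ h ≤ p - 1` (indices `i < p`), and `(a, b·p, c·p²)` (index `i = p`). -/
def derivedForm (a b c : ℤ) (p : ℕ) (i : Fin (p + 1)) : ℤ × ℤ × ℤ :=
  if (i : ℕ) < p then
    (a * (p : ℤ) ^ 2, (p : ℤ) * (b + 2 * a * (i.val : ℤ)),
      a * (i.val : ℤ) ^ 2 + b * (i.val : ℤ) + c)
  else (a, b * (p : ℤ), c * (p : ℤ) ^ 2)

/-!
A matrix of determinant `p` factors as `A = M * B`, where `det B = 1` and `M = !![d, h; 0, e]` with
`0 ≤ h < d`; thus `f = g ∘ A` is equivalent to `g ∘ M`. Since `d * e = p` is prime, either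
`d = p` and `e = 1`, or `d = 1`, `h = 0` and `e = p`: these are the `p + 1` listed forms.
-/

open scoped MatrixGroups

open Matrix

section HermiteNormalForm

lemma exists_mul_specialLinear_apply_one_zero_eq_zero {R : Type*} [CommRing R] [IsDomain R]
    [IsBezout R] (A : Matrix (Fin 2) (Fin 2) R) : ∃ C : SL(2, R), (A * C) 1 0 = 0 := by
  classical
  let _ := IsBezout.toGCDDomain R
  obtain ⟨γ, δ, hγ, hδ, hunit⟩ := extract_gcd (A 1 0) (A 1 1)
  have hcop : IsCoprime δ (-γ) := ((gcd_isUnit_iff γ δ).mp hunit).symm.neg_right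
  obtain ⟨C, hC₀, hC₁⟩ := hcop.exists_SL2_col 0
  refine ⟨C, ?_⟩
  rw [mul_apply, Fin.sum_univ_two, hC₀, hC₁]
  linear_combination δ * hγ - γ * hδ

variable {A : Matrix (Fin 2) (Fin 2) ℤ}

lemma exists_mul_specialLinear_upperTriangular_pos (hA : 0 < A.det) :
    ∃ (C : SL(2, ℤ)) (d h e : ℤ), 0 < d ∧ 0 < e ∧ A * C = !![d, h; 0, e] := by
  obtain ⟨C, hC⟩ := exists_mul_specialLinear_apply_one_zero_eq_zero A
  set M := A * C with hM
  have hMeta : M = !![M 0 0, M 0 1; 0, M 1 1] := by rw [← hC]; exact eta_fin_two M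
  have hdet : 0 < M 0 0 * M 1 1 := by
    have hMdet : M.det = A.det := by rw [hM, det_mul, C.det_coe, mul_one]
    rwa [← hMdet, det_fin_two, hC, mul_zero, sub_zero] at hA
  obtain ⟨hd, he⟩ | ⟨hd, he⟩ := mul_pos_iff.mp hdet
  · exact ⟨C, _, _, _, hd, he, hMeta⟩
  · refine ⟨-C, -M 0 0, -M 0 1, -M 1 1, neg_pos.mpr hd, neg_pos.mpr he, ?_⟩
    rw [Matrix.SpecialLinearGroup.coe_neg, mul_neg, ← hM, hMeta]
    simp

theorem exists_hermiteNormalForm_mul_specialLinear (hA : 0 < A.det) :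
    ∃ (d h e : ℕ) (B : SL(2, ℤ)), h < d ∧ A = !![(d : ℤ), (h : ℤ); 0, (e : ℤ)] * B := by
  obtain ⟨C, d, h, e, hd, he, hAC⟩ := exists_mul_specialLinear_upperTriangular_pos hA
  lift d to ℕ using hd.le
  lift e to ℕ using he.le
  obtain ⟨r, hr⟩ := Int.eq_ofNat_of_zero_le (h.emod_nonneg hd.ne')
  refine ⟨d, r, e, (C * ModularGroup.T ^ (-(h / d)))⁻¹, ?_, ?_⟩
  · exact_mod_cast hr ▸ h.emod_lt_of_pos hd
  · have hred : !![(d : ℤ), (r : ℤ); 0, (e : ℤ)] =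
        A * ((C * ModularGroup.T ^ (-(h / d)) : SL(2, ℤ)) : Matrix (Fin 2) (Fin 2) ℤ) := by
      rw [Matrix.SpecialLinearGroup.coe_mul, ← Matrix.mul_assoc, hAC, ModularGroup.coe_T_zpow, ← hr,
        Int.emod_def]
      simp [sub_eq_neg_add]
    rw [hred, Matrix.mul_assoc, ← Matrix.SpecialLinearGroup.coe_mul, mul_inv_cancel,
      Matrix.SpecialLinearGroup.coe_one, Matrix.mul_one]

end HermiteNormalForm

lemma DerivedVia.of_mul {f g k : ℤ × ℤ × ℤ} {M B : Matrix (Fin 2) (Fin 2) ℤ}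
    (hf : DerivedVia f g (M * B)) (hk : DerivedVia k g M) : DerivedVia f k B := by
  intro x y
  rw [hf, hk]
  simp only [mul_apply, Fin.sum_univ_two]
  congr 1 <;> ring

lemma DerivedVia.qfEquiv_of_mul {f g k : ℤ × ℤ × ℤ} {M : Matrix (Fin 2) (Fin 2) ℤ} {B : SL(2, ℤ)}
    (hf : DerivedVia f g (M * B)) (hk : DerivedVia k g M) : QFEquiv f k :=
  ⟨B, B.det_coe, hf.of_mul hk⟩

section DerivedForm

variable (a b c : ℤ) (p : ℕ)

lemma derivedVia_derivedForm_castSucc (h : Fin p) :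
    DerivedVia (derivedForm a b c p h.castSucc) (a, b, c) !![(p : ℤ), (h : ℤ); 0, 1] := by
  intro x y
  simp only [derivedForm, qfEval, Fin.val_castSucc, h.isLt, if_true, of_apply, cons_val]
  ring

lemma derivedVia_derivedForm_last :
    DerivedVia (derivedForm a b c p (Fin.last p)) (a, b, c) !![1, 0; 0, (p : ℤ)] := by
  intro x y
  simp only [derivedForm, qfEval, Fin.val_last, lt_irrefl, if_false, of_apply, cons_val]
  ring

end DerivedForm

theorem stmt7_general (a b c : ℤ) (p : ℕ) (hp : p.Prime) (f : ℤ × ℤ × ℤ)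
    (A : Matrix (Fin 2) (Fin 2) ℤ) (hA : A.det = (p : ℤ)) (hder : DerivedVia f (a, b, c) A) :
    ∃ i : Fin (p + 1), QFEquiv f (derivedForm a b c p i) := by
  have hpos : 0 < A.det := hA ▸ Int.natCast_pos.mpr hp.pos
  obtain ⟨d, h, e, B, hhd, rfl⟩ := exists_hermiteNormalForm_mul_specialLinear hpos
  have hde : d * e = p := by
    rw [det_mul, B.det_coe, mul_one, det_fin_two_of, mul_zero, sub_zero] at hA
    exact_mod_cast hA
  obtain ⟨-, rfl⟩ | ⟨-, rfl⟩ := Nat.prime_mul_iff.mp (hde ▸ hp)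
  · obtain rfl : d = p := by rwa [mul_one] at hde
    exact ⟨Fin.castSucc ⟨h, hhd⟩, hder.qfEquiv_of_mul (derivedVia_derivedForm_castSucc a b c d _)⟩
  · obtain rfl : e = p := by rwa [one_mul] at hde
    obtain rfl : h = 0 := Nat.lt_one_iff.mp hhd
    exact ⟨Fin.last e, hder.qfEquiv_of_mul (derivedVia_derivedForm_last a b c e)⟩

theorem stmt7 (a b c : ℤ) (hprim : IsPrimitiveQF (a, b, c)) (D : ℤ)
    (hdisc : qfDisc (a, b, c) = D) (hDmod : D % 4 = 0 ∨ D % 4 = 1)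
    (p : ℕ) (hp : p.Prime) (hcop : Int.gcd a (p : ℤ) = 1)
    (f : ℤ × ℤ × ℤ) (hfd : qfDisc f = D * (p : ℤ) ^ 2)
    (A : Matrix (Fin 2) (Fin 2) ℤ) (hA : A.det = (p : ℤ))
    (hder : DerivedVia f (a, b, c) A) :
    ∃ i : Fin (p + 1), QFEquiv f (derivedForm a b c p i) :=
  stmt7_general a b c p hp f A hA hder
end

section
/- Let a and b be positive integers, and suppose f is a reduced primitive binary quadratic form of discriminant −4·a²·b that is derived from the form (1,0,b) via some 2×2 integer matrix of determinant a, and that f is not equivalent to the form (1,0,a²·b). Let a₂ be the smallest positive divisor of a such that f is derived from the form (1,0,(a/a₂)²·b) via some 2×2 integer matrix of determinant a₂ (such a divisor exists, since a itself has this property), and set b₂ = (a/a₂)²·b. If b₂ > a₂², then f = (a₂², 2·a₂·k, k² + b₂) for some integer k with −a₂ ≤ 2k ≤ a₂. -/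
/-- A form `(a, b, c)` of negative discriminant with `a > 0` is reduced if
`|b| ≤ a ≤ c`, and `b ≥ 0` whenever `|b| = a` or `a = c`. -/
def IsReducedQF (f : ℤ × ℤ × ℤ) : Prop :=
  0 < f.1 ∧ |f.2.1| ≤ f.1 ∧ f.1 ≤ f.2.2 ∧
    ((|f.2.1| = f.1 ∨ f.1 = f.2.2) → 0 ≤ f.2.1)

/-!
If `A` has determinant `a₂` and derives `f` from `(1, 0, N)`, it sends `(A₁₁, -A₁₀)` to `(a₂, 0)`,
so `f` takes the value `a₂ ^ 2`, and the first coefficient `A₀₀ ^ 2 + N * A₁₀ ^ 2` of `f`, being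
its minimum, is at most `a₂ ^ 2`. When `a₂ ^ 2 < N` this forces `A₁₀ = 0`. The diagonal entry
`A₁₁` can then be moved from the matrix into the form, replacing `(1, 0, N)` by
`(1, 0, A₁₁ ^ 2 * N)` and the determinant by `A₀₀`, so minimality of `a₂` gives `A₁₁ = 1` up to
sign, and `k` is the remaining entry `A₀₁`.
-/

/-- The positive divisors `d` of `a` such that `f` is derived from `(1, 0, (a / d) ^ 2 * b)` via a
matrix of determinant `d`; the number `a₂` of the theorem is the least one. -/
def derivingDivisors (a b : ℤ) (f : ℤ × ℤ × ℤ) : Set ℤ :=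
  {d | 0 < d ∧ d ∣ a ∧ ∃ A : Matrix (Fin 2) (Fin 2) ℤ, A.det = d ∧
    DerivedVia f (1, 0, (a / d) ^ 2 * b) A}

section

variable {a b N : ℤ} {f g : ℤ × ℤ × ℤ} {A : Matrix (Fin 2) (Fin 2) ℤ}

theorem one_le_sq_sub_abs_mul_abs_add_sq {x y : ℤ} (hxy : x ≠ 0 ∨ y ≠ 0) :
    1 ≤ x ^ 2 - |x| * |y| + y ^ 2 := by
  have hpos : 0 < x ^ 2 + y ^ 2 := by
    rcases hxy with hx | hy <;> positivity
  have hsq : 0 ≤ (|x| - |y|) ^ 2 := sq_nonneg _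
  rw [sub_sq, sq_abs, sq_abs] at hsq
  linarith

theorem fst_le_qfEval (habs : |f.2.1| ≤ f.1) (hle : f.1 ≤ f.2.2) {x y : ℤ}
    (hxy : x ≠ 0 ∨ y ≠ 0) : f.1 ≤ qfEval f x y := by
  have hmid : -(f.1 * (|x| * |y|)) ≤ f.2.1 * x * y := by
    refine neg_le_of_abs_le ?_
    rw [mul_assoc, abs_mul, abs_mul]
    gcongr
  calc
    f.1 = f.1 * 1 := (mul_one _).symm
    _ ≤ f.1 * (x ^ 2 - |x| * |y| + y ^ 2) :=
      mul_le_mul_of_nonneg_left (one_le_sq_sub_abs_mul_abs_add_sq hxy)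
        ((abs_nonneg _).trans habs)
    _ = f.1 * x ^ 2 + -(f.1 * (|x| * |y|)) + f.1 * y ^ 2 := by ring
    _ ≤ f.1 * x ^ 2 + f.2.1 * x * y + f.2.2 * y ^ 2 := by gcongr

namespace DerivedVia

theorem eq_coeffs (h : DerivedVia f g A) :
    f = (qfEval g (A 0 0) (A 1 0),
      2 * g.1 * A 0 0 * A 0 1 + g.2.1 * (A 0 0 * A 1 1 + A 0 1 * A 1 0) +
        2 * g.2.2 * A 1 0 * A 1 1,
      qfEval g (A 0 1) (A 1 1)) := by
  have h₁₀ := h 1 0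
  have h₀₁ := h 0 1
  have h₁₁ := h 1 1
  simp only [qfEval] at h₁₀ h₀₁ h₁₁
  ext <;> simp only [qfEval] <;> linarith

theorem neg (h : DerivedVia f g A) : DerivedVia f g (-A) := by
  intro x y
  rw [h x y]
  simp only [qfEval, Matrix.neg_apply]
  ring

theorem qfEval_adjugate (h : DerivedVia f g A) :
    qfEval f (A 1 1) (-A 1 0) = g.1 * A.det ^ 2 := by
  rw [h, Matrix.det_fin_two]
  simp only [qfEval]
  ring

theorem fst_le_mul_det_sq (h : DerivedVia f g A) (habs : |f.2.1| ≤ f.1) (hle : f.1 ≤ f.2.2)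
    (hdet : A.det ≠ 0) : f.1 ≤ g.1 * A.det ^ 2 := by
  rw [← h.qfEval_adjugate]
  refine fst_le_qfEval habs hle ?_
  contrapose! hdet
  rw [Matrix.det_fin_two, hdet.1, neg_eq_zero.mp hdet.2]
  ring

theorem apply_one_zero_eq_zero (h : DerivedVia f (1, 0, N) A) (habs : |f.2.1| ≤ f.1)
    (hle : f.1 ≤ f.2.2) (hdet : A.det ≠ 0) (hN : A.det ^ 2 < N) : A 1 0 = 0 := by
  have hfst : f.1 = A 0 0 ^ 2 + N * A 1 0 ^ 2 := by
    rw [h.eq_coeffs]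
    simp only [qfEval]
    ring
  have hmin : f.1 ≤ 1 * A.det ^ 2 := h.fst_le_mul_det_sq habs hle hdet
  have hlt : N * A 1 0 ^ 2 < N * 1 := by linarith [sq_nonneg (A 0 0)]
  have hsq : A 1 0 ^ 2 < 1 := lt_of_mul_lt_mul_left hlt ((sq_nonneg _).trans hN.le)
  exact Int.abs_lt_one_iff.mp ((sq_lt_one_iff_abs_lt_one _).mp hsq)

theorem of_apply_one_zero_eq_zero (h : DerivedVia f g A) (hA : A 1 0 = 0) :
    DerivedVia f (g.1, A 1 1 * g.2.1, A 1 1 ^ 2 * g.2.2) !![A 0 0, A 0 1; 0, 1] := by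
  intro x y
  rw [h x y, hA]
  simp only [qfEval, Matrix.of_apply, Matrix.cons_val', Matrix.cons_val_zero,
    Matrix.cons_val_one, Matrix.cons_val_fin_one]
  ring

theorem apply_zero_zero_mem_derivingDivisors (h : DerivedVia f (1, 0, (a / A.det) ^ 2 * b) A)
    (hA : A 1 0 = 0) (hdvd : A.det ∣ a) (h₀₀ : 0 < A 0 0) (h₁₁ : A 1 1 ≠ 0) :
    A 0 0 ∈ derivingDivisors a b f := by
  have hdet : A.det = A 0 0 * A 1 1 := by rw [Matrix.det_fin_two, hA, mul_zero, sub_zero]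
  rw [hdet] at h hdvd
  obtain ⟨n, rfl⟩ := hdvd
  have hquot : A 0 0 * A 1 1 * n / A 0 0 = A 1 1 * n := by
    rw [mul_assoc, Int.mul_ediv_cancel_left _ h₀₀.ne']
  refine ⟨h₀₀, (dvd_mul_right _ _).mul_right n, !![A 0 0, A 0 1; 0, 1],
    by rw [Matrix.det_fin_two_of]; ring, ?_⟩
  have hder := h.of_apply_one_zero_eq_zero hA
  rwa [Int.mul_ediv_cancel_left _ (mul_ne_zero h₀₀.ne' h₁₁), mul_zero, ← mul_assoc, ← mul_pow,
    ← hquot] at hder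

theorem apply_one_one_eq_one_of_isLeast (h : DerivedVia f (1, 0, (a / A.det) ^ 2 * b) A)
    (hA : A 1 0 = 0) (hleast : IsLeast (derivingDivisors a b f) A.det) (h₁₁ : 0 < A 1 1) :
    A 1 1 = 1 := by
  obtain ⟨⟨hpos, hdvd, -⟩, hmin⟩ := hleast
  have hdet : A.det = A 0 0 * A 1 1 := by rw [Matrix.det_fin_two, hA, mul_zero, sub_zero]
  have h₀₀ : 0 < A 0 0 := pos_of_mul_pos_left (hdet ▸ hpos) h₁₁.le
  have hle : A 0 0 * A 1 1 ≤ A 0 0 * 1 := by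
    rw [← hdet, mul_one]
    exact hmin (h.apply_zero_zero_mem_derivingDivisors hA hdvd h₀₀ h₁₁.ne')
  exact le_antisymm (le_of_mul_le_mul_left hle h₀₀) h₁₁

theorem eq_of_apply_one_eq (h : DerivedVia f (1, 0, N) A) (hA : A 1 0 = 0) (h₁₁ : A 1 1 = 1) :
    f = (A.det ^ 2, 2 * A.det * A 0 1, A 0 1 ^ 2 + N) := by
  rw [h.eq_coeffs, Matrix.det_fin_two, hA, h₁₁]
  ext <;> simp only [qfEval] <;> ring

end DerivedVia

theorem exists_eq_of_isLeast_derivingDivisors (habs : |f.2.1| ≤ f.1) (hle : f.1 ≤ f.2.2) {a₂ : ℤ}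
    (hleast : IsLeast (derivingDivisors a b f) a₂) (hbig : a₂ ^ 2 < (a / a₂) ^ 2 * b) :
    ∃ k : ℤ, f = (a₂ ^ 2, 2 * a₂ * k, k ^ 2 + (a / a₂) ^ 2 * b) := by
  obtain ⟨hpos, -, A, rfl, hder⟩ := hleast.1
  have hA : A 1 0 = 0 := hder.apply_one_zero_eq_zero habs hle hpos.ne' hbig
  have hne : A 1 1 ≠ 0 := by
    intro h₁₁
    rw [Matrix.det_fin_two, hA, h₁₁, mul_zero, mul_zero, sub_zero] at hpos
    exact hpos.false
  wlog h₁₁ : 0 < A 1 1 generalizing A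
  · have hdet : (-A).det = A.det := by rw [Matrix.det_neg, Fintype.card_fin, neg_one_sq, one_mul]
    rw [← hdet] at hleast hbig hpos hder ⊢
    refine this (-A) hleast hbig hpos hder.neg ?_ ?_ ?_ <;> rw [Matrix.neg_apply]
    · rw [hA, neg_zero]
    · exact neg_ne_zero.mpr hne
    · exact neg_pos.mpr (lt_of_le_of_ne (not_lt.mp h₁₁) hne)
  exact ⟨A 0 1, hder.eq_of_apply_one_eq hA
    (hder.apply_one_one_eq_one_of_isLeast hA hleast h₁₁)⟩

end

theorem abs_two_mul_le_of_abs_two_mul_mul_le_sq {m k : ℤ} (hm : 0 < m)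
    (h : |2 * m * k| ≤ m ^ 2) : |2 * k| ≤ m := by
  rw [mul_right_comm, abs_mul, abs_of_pos hm, sq] at h
  exact le_of_mul_le_mul_right h hm

theorem stmt10_general (a b : ℤ) (f : ℤ × ℤ × ℤ) (habs : |f.2.1| ≤ f.1) (hle : f.1 ≤ f.2.2)
    (a₂ : ℤ) (hleast : IsLeast (derivingDivisors a b f) a₂)
    (hbig : (a / a₂) ^ 2 * b > a₂ ^ 2) :
    ∃ k : ℤ, f = (a₂ ^ 2, 2 * a₂ * k, k ^ 2 + (a / a₂) ^ 2 * b) ∧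
      -a₂ ≤ 2 * k ∧ 2 * k ≤ a₂ := by
  obtain ⟨k, rfl⟩ := exists_eq_of_isLeast_derivingDivisors habs hle hleast hbig
  exact ⟨k, rfl, abs_le.mp (abs_two_mul_le_of_abs_two_mul_mul_le_sq hleast.1.1 habs)⟩

theorem stmt10 (a b : ℤ) (ha : 0 < a) (hb : 0 < b)
    (f : ℤ × ℤ × ℤ) (hred : IsReducedQF f) (hprim : IsPrimitiveQF f)
    (hdisc : qfDisc f = -4 * a ^ 2 * b)
    (A : Matrix (Fin 2) (Fin 2) ℤ) (hA : A.det = a)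
    (hder : DerivedVia f (1, 0, b) A)
    (hne : ¬ QFEquiv f (1, 0, a ^ 2 * b))
    (a₂ : ℤ)
    (ha₂ : 0 < a₂ ∧ a₂ ∣ a ∧ ∃ A₂ : Matrix (Fin 2) (Fin 2) ℤ, A₂.det = a₂ ∧
      DerivedVia f (1, 0, (a / a₂) ^ 2 * b) A₂)
    (hmin : ∀ d : ℤ, (0 < d ∧ d ∣ a ∧ ∃ A' : Matrix (Fin 2) (Fin 2) ℤ, A'.det = d ∧
      DerivedVia f (1, 0, (a / d) ^ 2 * b) A') → a₂ ≤ d)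
    (hbig : (a / a₂) ^ 2 * b > a₂ ^ 2) :
    ∃ k : ℤ, f = (a₂ ^ 2, 2 * a₂ * k, k ^ 2 + (a / a₂) ^ 2 * b) ∧
      -a₂ ≤ 2 * k ∧ 2 * k ≤ a₂ :=
  stmt10_general a b f hred.2.1 hred.2.2.1 a₂ ⟨ha₂, hmin⟩ hbig
end

section
/- Let n, a, b be positive integers with n = a²·b, and let r be an odd prime with 9·r² > 16·n. Let a₁, a₂ be positive integers with gcd(r, a₁·a₂) = 1 and 9·a₁·a₂ ≤ 4·n·r². Suppose x, y ∈ ℤ satisfy x² + b·r²·y² = a₁·a₂. Let x₁, x₂ ∈ ℤ satisfy x₁² ≡ a₁ (mod r²) and x₂² ≡ a₂ (mod r²), and let x₄ ∈ ℤ satisfy x₄ ≡ x₁·x₂ (mod r²) and 2·|x₄| ≤ r². Then x = x₄ or x = −x₄. -/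
/-!
Modulo `p ^ k` the equation reads `x ^ 2 ≡ x₄ ^ 2`, so `p ^ k ∣ (x - x₄) * (x + x₄)`. The sum
`2 * x` of the two factors is prime to `p`, since `x ^ 2 ≡ a₁ * a₂` is, hence all of `p ^ k` divides
one of them. The size bounds on `x` and `x₄` make each factor smaller than `p ^ k` in absolute
value, so that factor vanishes.
-/

theorem pow_dvd_or_pow_dvd_of_not_dvd_add {R : Type*} [CommSemiring R] [IsCancelMulZero R]
    {p u v : R} (hp : Prime p) (huv : ¬ p ∣ u + v) {k : ℕ} (h : p ^ k ∣ u * v) :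
    p ^ k ∣ u ∨ p ^ k ∣ v := by
  by_cases hu : p ∣ u
  · have hv : ¬ p ∣ v := fun hv => huv (dvd_add hu hv)
    exact .inl (hp.pow_dvd_of_dvd_mul_right k hv h)
  · exact .inr (hp.pow_dvd_of_dvd_mul_left k hu h)

theorem pow_dvd_sub_or_pow_dvd_add_of_pow_dvd_sq_sub_sq {R : Type*} [CommRing R] [IsDomain R]
    {p x y : R} (hp : Prime p) (hx : ¬ p ∣ 2 * x) {k : ℕ} (h : p ^ k ∣ x ^ 2 - y ^ 2) :
    p ^ k ∣ x - y ∨ p ^ k ∣ x + y := by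
  refine pow_dvd_or_pow_dvd_of_not_dvd_add hp ?_ ?_
  · rwa [sub_add_add_cancel, ← two_mul]
  · rwa [mul_comm, ← sq_sub_sq]

theorem eq_or_eq_neg_of_sq_modEq_sq {p : ℕ} (hp : p.Prime) (hodd : Odd p) {k : ℕ} {x y : ℤ}
    (hpx : ¬ (p : ℤ) ∣ x) (h : x ^ 2 ≡ y ^ 2 [ZMOD (p : ℤ) ^ k])
    (hx : 2 * |x| < (p : ℤ) ^ k) (hy : 2 * |y| ≤ (p : ℤ) ^ k) :
    x = y ∨ x = -y := by
  have hp' : Prime (p : ℤ) := Nat.prime_iff_prime_int.mp hp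
  have hp2 : ¬ (p : ℤ) ∣ 2 := fun h2 =>
    hp.ne_one (Nat.Coprime.eq_one_of_dvd hodd.coprime_two_right (by exact_mod_cast h2))
  have hp2x : ¬ (p : ℤ) ∣ 2 * x := hp'.not_dvd_mul hp2 hpx
  have hsub : |x - y| < (p : ℤ) ^ k := by linarith [abs_sub x y]
  have hadd : |x + y| < (p : ℤ) ^ k := by linarith [abs_add_le x y]
  rcases pow_dvd_sub_or_pow_dvd_add_of_pow_dvd_sq_sub_sq hp' hp2x h.symm.dvd with hd | hd
  · exact .inl (sub_eq_zero.mp (Int.eq_zero_of_abs_lt_dvd hd hsub))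
  · exact .inr (eq_neg_of_add_eq_zero_left (Int.eq_zero_of_abs_lt_dvd hd hadd))

theorem stmt11_general {p : ℕ} (hp : p.Prime) (hodd : Odd p) {k : ℕ} (hk : k ≠ 0)
    {a₁ a₂ b x y x₁ x₂ x₄ : ℤ} (hb : 0 ≤ b) (hpa : IsCoprime (p : ℤ) (a₁ * a₂))
    (hlt : 4 * (a₁ * a₂) < ((p : ℤ) ^ k) ^ 2)
    (hxy : x ^ 2 + b * (p : ℤ) ^ k * y ^ 2 = a₁ * a₂)
    (hx₁ : x₁ ^ 2 ≡ a₁ [ZMOD (p : ℤ) ^ k]) (hx₂ : x₂ ^ 2 ≡ a₂ [ZMOD (p : ℤ) ^ k])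
    (hx₄ : x₄ ≡ x₁ * x₂ [ZMOD (p : ℤ) ^ k]) (hx₄small : 2 * |x₄| ≤ (p : ℤ) ^ k) :
    x = x₄ ∨ x = -x₄ := by
  have hpx : ¬ (p : ℤ) ∣ x := fun hdvd =>
    (Nat.prime_iff_prime_int.mp hp).coprime_iff_not_dvd.mp hpa <| hxy ▸ dvd_add
      (dvd_pow hdvd two_ne_zero) (((dvd_pow_self _ hk).mul_left b).mul_right _)
  have hsq : x ^ 2 ≡ x₄ ^ 2 [ZMOD (p : ℤ) ^ k] :=
    calc
      x ^ 2 ≡ a₁ * a₂ [ZMOD (p : ℤ) ^ k] :=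
        Int.modEq_iff_dvd.mpr ⟨b * y ^ 2, by linear_combination -hxy⟩
      _ ≡ x₁ ^ 2 * x₂ ^ 2 [ZMOD (p : ℤ) ^ k] := (hx₁.mul hx₂).symm
      _ = (x₁ * x₂) ^ 2 := (mul_pow x₁ x₂ 2).symm
      _ ≡ x₄ ^ 2 [ZMOD (p : ℤ) ^ k] := (hx₄.pow 2).symm
  have hxlt : 2 * |x| < (p : ℤ) ^ k := by
    have hsq_le : x ^ 2 ≤ a₁ * a₂ := hxy ▸ le_add_of_nonneg_right (by positivity)
    refine lt_of_pow_lt_pow_left₀ 2 (by positivity) ?_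
    calc
      (2 * |x|) ^ 2 = 4 * x ^ 2 := by rw [mul_pow, sq_abs]; norm_num
      _ ≤ 4 * (a₁ * a₂) := by gcongr
      _ < ((p : ℤ) ^ k) ^ 2 := hlt
  exact eq_or_eq_neg_of_sq_modEq_sq hp hodd hpx hsq hxlt hx₄small

theorem stmt11 (n a b : ℤ) (hn : 0 < n) (ha : 0 < a) (hb : 0 < b)
    (hnab : n = a ^ 2 * b)
    (r : ℕ) (hr : r.Prime) (hrodd : Odd r) (hrn : 9 * (r : ℤ) ^ 2 > 16 * n)
    (a₁ a₂ : ℤ) (ha₁ : 0 < a₁) (ha₂ : 0 < a₂)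
    (hgcd : Int.gcd (r : ℤ) (a₁ * a₂) = 1)
    (hle : 9 * (a₁ * a₂) ≤ 4 * n * (r : ℤ) ^ 2)
    (x y : ℤ) (hxy : x ^ 2 + b * (r : ℤ) ^ 2 * y ^ 2 = a₁ * a₂)
    (x₁ x₂ : ℤ) (hx₁ : x₁ ^ 2 ≡ a₁ [ZMOD ((r : ℤ) ^ 2)])
    (hx₂ : x₂ ^ 2 ≡ a₂ [ZMOD ((r : ℤ) ^ 2)])
    (x₄ : ℤ) (hx₄ : x₄ ≡ x₁ * x₂ [ZMOD ((r : ℤ) ^ 2)])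
    (hx₄small : 2 * |x₄| ≤ (r : ℤ) ^ 2) :
    x = x₄ ∨ x = -x₄ := by
  have hr_sq : 0 < (r : ℤ) ^ 2 := pow_pos (Nat.cast_pos.mpr hr.pos) 2
  exact stmt11_general hr hrodd two_ne_zero hb.le (Int.isCoprime_iff_gcd_eq_one.mpr hgcd)
    (by linarith [mul_pos hr_sq (sub_pos.mpr hrn)]) hxy hx₁ hx₂ hx₄ hx₄small
end

section
/- Let D < 0 be an integer with D ≡ 0 or 1 (mod 4), and let f and g be equivalent primitive binary quadratic forms of discriminant D with positive leading coefficients. Suppose f represents an integer m with gcd(m, D) = 1 and g represents an integer m' with gcd(m', D) = 1. Then for every odd prime p dividing D, the Legendre symbols satisfy (m/p) = (m'/p). -/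
/-- The form `f` represents the integer `m`. -/
def Represents (f : ℤ × ℤ × ℤ) (m : ℤ) : Prop := ∃ x y : ℤ, qfEval f x y = m

/-! A form `f` of discriminant `D` and its polar form `B` satisfy
`(2 f(v)) (2 f(v')) = B(v, v')² - D det(v, v')²`. So if `f` represents `m` and `m'`, then
`(2 m) (2 m')` is a square modulo every divisor `n` of `D`, whence `m` and `m'` have the same
quadratic character modulo `n` when `n` is odd and coprime to both; and equivalent forms represent
the same numbers. -/

section JacobiSymbol

open scoped NumberTheorySymbols

theorem jacobiSym_eq_of_mul_modEq_sq {n : ℕ} {a b s : ℤ} (ha : a.gcd n = 1) (hb : b.gcd n = 1)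
    (h : a * b ≡ s ^ 2 [ZMOD n]) : J(a | n) = J(b | n) := by
  have hmul : J(a | n) * J(b | n) = J(s | n) ^ 2 := by
    rw [← jacobiSym.mul_left, ← jacobiSym.pow_left, jacobiSym.mod_left' h]
  have hnonneg : 0 ≤ J(a | n) * J(b | n) := hmul.symm ▸ sq_nonneg _
  rcases jacobiSym.eq_one_or_neg_one ha with ha' | ha' <;>
    rcases jacobiSym.eq_one_or_neg_one hb with hb' | hb' <;>
    rw [ha', hb'] at hnonneg ⊢ <;>
    omega

/-- The polar form `B(v, v') = f(v + v') - f(v) - f(v')` of the form `f`, at `v = (x, y)` and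
`v' = (z, w)`; with this normalization `B(v, v) = 2 f(v)`, so that no halves occur. -/
def qfPolar (f : ℤ × ℤ × ℤ) (x y z w : ℤ) : ℤ :=
  2 * f.1 * x * z + f.2.1 * (x * w + y * z) + 2 * f.2.2 * y * w

theorem two_mul_qfEval_mul_two_mul_qfEval (f : ℤ × ℤ × ℤ) (x y z w : ℤ) :
    (2 * qfEval f x y) * (2 * qfEval f z w) =
      qfPolar f x y z w ^ 2 - qfDisc f * (x * w - y * z) ^ 2 := by
  unfold qfEval qfPolar qfDisc
  ring

theorem DerivedVia.represents {f g : ℤ × ℤ × ℤ} {A : Matrix (Fin 2) (Fin 2) ℤ} {m : ℤ}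
    (h : DerivedVia f g A) (hm : Represents f m) : Represents g m := by
  obtain ⟨x, y, hxy⟩ := hm
  exact ⟨_, _, (h x y).symm.trans hxy⟩

namespace Represents

variable {f : ℤ × ℤ × ℤ} {m m' : ℤ}

theorem exists_two_mul_mul_two_mul_modEq_sq {n : ℤ} (hm : Represents f m) (hm' : Represents f m')
    (hn : n ∣ qfDisc f) : ∃ s, (2 * m) * (2 * m') ≡ s ^ 2 [ZMOD n] := by
  obtain ⟨x, y, rfl⟩ := hm
  obtain ⟨z, w, rfl⟩ := hm'
  refine ⟨qfPolar f x y z w, Int.modEq_iff_dvd.mpr ?_⟩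
  rw [two_mul_qfEval_mul_two_mul_qfEval, sub_sub_cancel]
  exact hn.mul_right _

theorem jacobiSym_eq {n : ℕ} (hm : Represents f m) (hm' : Represents f m') (hodd : Odd n)
    (hn : (n : ℤ) ∣ qfDisc f) (hmn : m.gcd n = 1) (hmn' : m'.gcd n = 1) :
    J(m | n) = J(m' | n) := by
  have h2 : Int.gcd 2 n = 1 := hodd.coprime_two_left
  have gcd_two_mul_eq_one {k : ℤ} (hk : k.gcd n = 1) : (2 * k).gcd n = 1 := by
    rw [← Int.isCoprime_iff_gcd_eq_one] at h2 hk ⊢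
    exact h2.mul_left hk
  obtain ⟨s, hs⟩ := hm.exists_two_mul_mul_two_mul_modEq_sq hm' hn
  have htwice : J(2 * m | n) = J(2 * m' | n) :=
    jacobiSym_eq_of_mul_modEq_sq (gcd_two_mul_eq_one hmn) (gcd_two_mul_eq_one hmn') hs
  rw [jacobiSym.mul_left, jacobiSym.mul_left] at htwice
  exact mul_left_cancel₀ (jacobiSym.ne_zero h2) htwice

end Represents

theorem stmt12_general {f g : ℤ × ℤ × ℤ} {A : Matrix (Fin 2) (Fin 2) ℤ} (h : DerivedVia f g A)
    {m m' : ℤ} (hm : Represents f m) (hm' : Represents g m') {n : ℕ} (hodd : Odd n)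
    (hn : (n : ℤ) ∣ qfDisc g) (hmn : m.gcd n = 1) (hmn' : m'.gcd n = 1) :
    J(m | n) = J(m' | n) :=
  (h.represents hm).jacobiSym_eq hm' hodd hn hmn hmn'

end JacobiSymbol

theorem stmt12 (D : ℤ) (hD : D < 0) (hDmod : D % 4 = 0 ∨ D % 4 = 1)
    (f g : ℤ × ℤ × ℤ) (hfp : IsPrimitiveQF f) (hgp : IsPrimitiveQF g)
    (hfl : 0 < f.1) (hgl : 0 < g.1)
    (hfd : qfDisc f = D) (hgd : qfDisc g = D) (heq : QFEquiv f g)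
    (m m' : ℤ) (hm : Represents f m) (hm' : Represents g m')
    (hmD : Int.gcd m D = 1) (hm'D : Int.gcd m' D = 1) :
    ∀ (p : ℕ) (hp : p.Prime), Odd p → (p : ℤ) ∣ D →
      @legendreSym p ⟨hp⟩ m = @legendreSym p ⟨hp⟩ m' := by
  intro p hp hodd hpD
  obtain ⟨A, -, hA⟩ := heq
  have gcd_p_eq_one {k : ℤ} (hk : k.gcd D = 1) : k.gcd p = 1 :=
    Nat.dvd_one.mp (hk ▸ Int.gcd_dvd_gcd_of_dvd_right k hpD)
  simpa only [@jacobiSym.legendreSym.to_jacobiSym p ⟨hp⟩] using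
    stmt12_general hA hm hm' hodd (hgd ▸ hpD) (gcd_p_eq_one hmD) (gcd_p_eq_one hm'D)
end
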